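/- arXiv:2503.20567 — 2 statements merged into one kernel-verified Lean document; each statement's English description precedes it below -/
import Mathlib

section
/- The subdiagonal entries of X_n = B_n^{-1} A_n satisfy X_n(i+1, i) = -i for i = 2,…,n-1. -/
/-- a_i = -(i+α+1)(i+κ+1) -/
def acoef (α κ : ℝ) (i : ℕ) : ℝ := -(((i : ℝ) + α + 1) * ((i : ℝ) + κ + 1))

/-- b_i = i(2i+α+κ+1)+(i+α+1)(i+κ+1) -/
def bcoef (α κ : ℝ) (i : ℕ) : ℝ :=
  (i : ℝ) * (2 * (i : ℝ) + α + κ + 1) + ((i : ℝ) + α + 1) * ((i : ℝ) + κ + 1)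

/-- c_i = -i(3i+α+κ) -/
def ccoef (α κ : ℝ) (i : ℕ) : ℝ := -((i : ℝ) * (3 * (i : ℝ) + α + κ))

/-- d_i = (i-1)i -/
def dcoef (i : ℕ) : ℝ := ((i : ℝ) - 1) * (i : ℝ)

/-- The banded matrix `A_n` of the four-term recurrence: with 1-based
indices, `A_n(i,i) = b_{i-1}`, `A_n(i,i+1) = a_{i-1}`, `A_n(i+1,i) = c_i`,
`A_n(i+2,i) = d_{i+1}`.  Here `i : Fin n` is the 0-based index, so the
coefficient index coincides with the 0-based row index. -/
def Amat (α κ : ℝ) (n : ℕ) : Matrix (Fin n) (Fin n) ℝ := fun i j =>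
  if (i : ℕ) = (j : ℕ) then bcoef α κ i
  else if (j : ℕ) = (i : ℕ) + 1 then acoef α κ i
  else if (i : ℕ) = (j : ℕ) + 1 then ccoef α κ i
  else if (i : ℕ) = (j : ℕ) + 2 then dcoef i
  else 0

/-- The lower bidiagonal matrix `B_n` with diagonal entries
`e_{i-1} = i` (1-based) and subdiagonal entries `f_i = -i`. -/
def Bmat (n : ℕ) : Matrix (Fin n) (Fin n) ℝ := fun i j =>
  if (i : ℕ) = (j : ℕ) then ((i : ℕ) : ℝ) + 1
  else if (i : ℕ) = (j : ℕ) + 1 then -((i : ℕ) : ℝ)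
  else 0

/-- `X_n = B_n⁻¹ A_n`. -/
noncomputable def Xmat (α κ : ℝ) (n : ℕ) : Matrix (Fin n) (Fin n) ℝ :=
  (Bmat n)⁻¹ * Amat α κ n

/-- Explicit inverse of `Bmat`. -/
noncomputable def Lmat (n : ℕ) : Matrix (Fin n) (Fin n) ℝ := fun i j =>
  if (j : ℕ) ≤ (i : ℕ) then 1 / (((i : ℕ) : ℝ) + 1) else 0

theorem Bmat_mul_Lmat (n : ℕ) : Bmat n * Lmat n = 1 := by
  ext ⟨i, hi⟩ ⟨k, hk⟩
  rw [Matrix.mul_apply]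
  have hpos : ((i : ℝ) + 1) ≠ 0 := by positivity
  rcases i with _ | m
  · have : ∀ j : Fin n, Bmat n ⟨0, hi⟩ j * Lmat n j ⟨k, hk⟩ =
        if j = ⟨0, hi⟩ then (if k = 0 then 1 else 0) else 0 := by
      rintro ⟨j, hj⟩
      simp only [Bmat, Lmat, Fin.mk.injEq]
      split_ifs <;> first | omega | (subst_vars; simp)
    rw [Finset.sum_congr rfl (fun j _ => this j), Finset.sum_ite_eq']
    simp [Matrix.one_apply, eq_comm]
  · have hm : m < n := by omega
    have : ∀ j : Fin n, Bmat n ⟨m + 1, hi⟩ j * Lmat n j ⟨k, hk⟩ =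
        (if j = ⟨m + 1, hi⟩ then (if k ≤ m + 1 then 1 else 0) else 0)
        + (if j = ⟨m, hm⟩ then (if k ≤ m then -1 else 0) else 0) := by
      rintro ⟨j, hj⟩
      have hp : ((m : ℝ) + 1) ≠ 0 := by positivity
      simp only [Bmat, Lmat, Fin.mk.injEq]
      split_ifs <;> first | omega | (subst_vars; push_cast at *; field_simp; try ring) | (subst_vars; simp)
    rw [Finset.sum_congr rfl (fun j _ => this j), Finset.sum_add_distrib,
      Finset.sum_ite_eq', Finset.sum_ite_eq']
    simp only [Finset.mem_univ, if_true, Matrix.one_apply, Fin.mk.injEq]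
    split_ifs <;> first | omega | norm_num

/-- Subdiagonal entries (1-based): `X_n(i+1,i) = -i` for `i = 2,…,n-1`.
In 0-based indices: row `i`, column `i-1`. -/
theorem Xmat_subdiagonal (α κ : ℝ) (n : ℕ) :
    ∀ i : ℕ, ∀ _h2 : 2 ≤ i, ∀ _hi : i ≤ n - 1,
      Xmat α κ n ⟨i, by omega⟩ ⟨i - 1, by omega⟩ = -(i : ℝ) := by
  intro i h2 hi
  obtain ⟨m, rfl⟩ : ∃ m, i = m + 2 := ⟨i - 2, by omega⟩
  have hn2 : m + 2 < n := by omega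
  have hn1 : m + 1 < n := by omega
  have hn0 : m < n := by omega
  have hp : ((m : ℝ) + 3) ≠ 0 := by positivity
  rw [Xmat, Matrix.inv_eq_right_inv (Bmat_mul_Lmat n), Matrix.mul_apply]
  have : ∀ j : Fin n, Lmat n ⟨m + 2, hn2⟩ j * Amat α κ n j ⟨m + 2 - 1, by omega⟩ =
      (if j = ⟨m, hn0⟩ then 1 / ((m : ℝ) + 3) * acoef α κ m else 0)
      + (if j = ⟨m + 1, hn1⟩ then 1 / ((m : ℝ) + 3) * bcoef α κ (m + 1) else 0)
      + (if j = ⟨m + 2, hn2⟩ then 1 / ((m : ℝ) + 3) * ccoef α κ (m + 2) else 0) := by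
    rintro ⟨j, hj⟩
    have e : (((m + 2 : ℕ) : ℝ) + 1) = (m : ℝ) + 3 := by push_cast; ring
    simp only [Lmat, Amat, Fin.mk.injEq, e]
    split_ifs <;> first | omega | (subst_vars; simp)
  rw [Finset.sum_congr rfl (fun j _ => this j), Finset.sum_add_distrib,
    Finset.sum_add_distrib, Finset.sum_ite_eq', Finset.sum_ite_eq', Finset.sum_ite_eq']
  simp only [Finset.mem_univ, if_true, acoef, bcoef, ccoef]
  push_cast
  field_simp
  ring
end

section
/- With 𝔏_n as defined by the four-term recurrence, the degree of 𝔏_n is n, and its leading coefficient is η · ∏_{i=0}^{n-1} (e_i / a_i) = η · ∏_{i=0}^{n-1} (i+1)/(-(i+α+1)(i+κ+1)), which is nonzero when α, κ > -1. -/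
open Polynomial in
/-- The polynomial `𝔏_n` defined by the four-term recurrence has degree `n`
and leading coefficient `η ∏_{i=0}^{n-1} (i+1)/(-(i+α+1)(i+κ+1))`, which is
nonzero when `α, κ > -1`. -/
theorem degree_and_leadingCoeff (α κ η : ℝ) (hα : -1 < α) (hκ : -1 < κ) (hη : η ≠ 0)
    (L : ℤ → Polynomial ℝ)
    (hm2 : L (-2) = 0) (hm1 : L (-1) = 0) (h0 : L 0 = C η)
    (hrec : ∀ i : ℕ,
      X * (C ((i : ℝ) + 1) * L (i : ℤ) - C (i : ℝ) * L ((i : ℤ) - 1)) =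
        C (acoef α κ i) * L ((i : ℤ) + 1) + C (bcoef α κ i) * L (i : ℤ) +
          C (ccoef α κ i) * L ((i : ℤ) - 1) + C (dcoef i) * L ((i : ℤ) - 2))
    (n : ℕ) :
    (L (n : ℤ)).natDegree = n ∧
    (L (n : ℤ)).leadingCoeff =
      η * ∏ i ∈ Finset.range n, (((i : ℝ) + 1) / (-(((i : ℝ) + α + 1) * ((i : ℝ) + κ + 1)))) ∧
    (L (n : ℤ)).leadingCoeff ≠ 0 := by
  have key : ∀ n : ℕ, (∀ m : ℕ, n < m → (L (n : ℤ)).coeff m = 0) ∧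
      (∀ m : ℕ, n ≤ m → (L ((n : ℤ) - 1)).coeff m = 0) ∧
      (∀ m : ℕ, n ≤ m → (L ((n : ℤ) - 2)).coeff m = 0) ∧
      (L (n : ℤ)).coeff n = η * ∏ i ∈ Finset.range n,
        (((i : ℝ) + 1) / (-(((i : ℝ) + α + 1) * ((i : ℝ) + κ + 1)))) := by
    intro n
    induction n with
    | zero =>
      refine ⟨fun m hm => ?_, fun m _ => ?_, fun m _ => ?_, ?_⟩
      · simp only [Nat.cast_zero, h0]
        exact coeff_C_of_ne_zero (by omega)
      · simp [hm1]
      · simp [hm2]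
      · simp [h0]
    | succ n ih =>
      obtain ⟨h1, h2, h3, h4⟩ := ih
      have ha : acoef α κ n ≠ 0 := by
        have hn : (0 : ℝ) ≤ n := Nat.cast_nonneg n
        have e1 : (0 : ℝ) < (n : ℝ) + α + 1 := by linarith
        have e2 : (0 : ℝ) < (n : ℝ) + κ + 1 := by linarith
        exact neg_ne_zero.mpr (mul_pos e1 e2).ne'
      have hc : ∀ m : ℕ, n ≤ m → ((n : ℝ) + 1) * (L (n : ℤ)).coeff m =
          acoef α κ n * (L ((n : ℤ) + 1)).coeff (m + 1) := by
        intro m hm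
        have := congrArg (fun p => p.coeff (m + 1)) (hrec n)
        simp only [coeff_X_mul, coeff_add, coeff_sub, coeff_C_mul] at this
        rw [h2 m hm, h1 (m + 1) (by omega), h2 (m + 1) (by omega), h3 (m + 1) (by omega)] at this
        linarith
      have e1 : ((n + 1 : ℕ) : ℤ) - 1 = n := by push_cast; ring
      have e2 : ((n + 1 : ℕ) : ℤ) - 2 = (n : ℤ) - 1 := by push_cast; ring
      have e3 : ((n + 1 : ℕ) : ℤ) = (n : ℤ) + 1 := by push_cast; ring
      rw [e1, e2, e3]
      refine ⟨fun m hm => ?_, fun m hm => h1 m (by omega), fun m hm => h2 m (by omega), ?_⟩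
      · obtain ⟨k, rfl⟩ : ∃ k, m = k + 1 := ⟨m - 1, by omega⟩
        have := hc k (by omega)
        rw [h1 k (by omega), mul_zero] at this
        exact (mul_eq_zero.mp this.symm).resolve_left ha
      · have := hc n le_rfl
        rw [Finset.prod_range_succ, ← mul_assoc, ← h4]
        change _ = _ * (_ / acoef α κ n)
        rw [← mul_div_assoc, eq_div_iff ha]
        linarith
  obtain ⟨h1, -, -, h4⟩ := key n
  have hne : η * ∏ i ∈ Finset.range n,
        (((i : ℝ) + 1) / (-(((i : ℝ) + α + 1) * ((i : ℝ) + κ + 1)))) ≠ 0 := by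
    refine mul_ne_zero hη (Finset.prod_ne_zero_iff.mpr fun i _ => ?_)
    have hn : (0 : ℝ) ≤ i := Nat.cast_nonneg i
    have e1 : (0 : ℝ) < (i : ℝ) + α + 1 := by linarith
    have e2 : (0 : ℝ) < (i : ℝ) + κ + 1 := by linarith
    exact div_ne_zero (by positivity) (neg_ne_zero.mpr (mul_pos e1 e2).ne')
  have hd : (L (n : ℤ)).natDegree = n :=
    natDegree_eq_of_le_of_coeff_ne_zero (natDegree_le_iff_coeff_eq_zero.mpr h1) (h4 ▸ hne)
  have hl : (L (n : ℤ)).leadingCoeff = (L (n : ℤ)).coeff n := by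
    rw [leadingCoeff, hd]
  rw [hl, h4]
  exact ⟨hd, rfl, hne⟩
end
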